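/- Let F be the free monoid on the three-element set {a, x, b}, and let ρ be the right congruence on the direct product F × F generated by the two pairs ((ax, 1), (a, x)) and ((ab, 1), (aa, 1)). Then the right congruence ann((a,b)ρ) = {(u,v) ∈ (F×F) × (F×F) : ((a,b)u) ρ ((a,b)v)} on F × F is not finitely generated; consequently F × F is not right coherent. -/

import Mathlib

def IsRightCongruence {M : Type*} [Monoid M] (r : M → M → Prop) : Prop :=
  Equivalence r ∧ ∀ a b c : M, r a b → r (a * c) (b * c)

def RCongGenBy {M : Type*} [Monoid M] (H : Set (M × M)) (r : M → M → Prop) : Prop :=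
  IsRightCongruence r ∧ (∀ p ∈ H, r p.1 p.2) ∧
    ∀ r' : M → M → Prop, IsRightCongruence r' → (∀ p ∈ H, r' p.1 p.2) →
      ∀ x y : M, r x y → r' x y

def FGRightCongruence {M : Type*} [Monoid M] (r : M → M → Prop) : Prop :=
  ∃ H : Set (M × M), H.Finite ∧ RCongGenBy H r

def RightCoherent (M : Type*) [Monoid M] : Prop :=
  ∀ r : M → M → Prop, FGRightCongruence r → ∀ a b : M,
    (∃ C : Finset M,
      {x : M | (∃ s : M, r x (a * s)) ∧ (∃ t : M, r x (b * t))} =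
        ⋃ c ∈ C, {x : M | ∃ s : M, r x (c * s)}) ∧
    FGRightCongruence (fun u v : M => r (a * u) (a * v))

abbrev F17 : Type := FreeMonoid (Fin 3)

def a17 : F17 := FreeMonoid.of 0
def x17 : F17 := FreeMonoid.of 1
def b17 : F17 := FreeMonoid.of 2

/-!
Let `ρ` be generated by `((ax, 1), (a, y))` and `((ab, 1), (aa, 1))`; the case of interest is
`y = x`, with annihilator taken at `(a, c)` for `c = b`.  The powers of `x` that follow the first
letter can be moved to the second component, so the annihilator contains every pair
`((xⁿb, 1), (xⁿa, 1))`.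

On the other hand, moving those powers of `x` as far as possible leaves a word of length determined
by the `ρ`-class and a second component determined by the `ρ`-class.  For `(a, c) * (u, s)` that
second component is `yⁿ * (c * s)`, where `n` letters have been moved; it determines `n`, hence the
length of `u`.  So pairs in the annihilator have first components of equal length, and the
annihilator is covered by the increasing chain of right congruences "first components of equal
length that agree from position `k` on".  If it were finitely generated it would lie in one member
of the chain, but `xᵏb` and `xᵏa` differ at position `k`.
-/

open FreeMonoid (of)

section RightCongruence

variable {M N : Type*} [Monoid M] [Monoid N]

lemma IsRightCongruence.comap {r : N → N → Prop} (hr : IsRightCongruence r) (f : M →* N) :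
    IsRightCongruence fun u v => r (f u) (f v) :=
  ⟨hr.1.comap f, fun u v w huv => by simpa only [map_mul] using hr.2 _ _ (f w) huv⟩

lemma FGRightCongruence.exists_le_of_monotone {ι : Type*} [Preorder ι] [IsDirectedOrder ι]
    [Nonempty ι] {r : M → M → Prop} (hr : FGRightCongruence r) {σ : ι → M → M → Prop}
    (hσ : ∀ i, IsRightCongruence (σ i)) (hmono : Monotone σ)
    (hcover : ∀ u v, r u v → ∃ i, σ i u v) : ∃ i, r ≤ σ i := by
  obtain ⟨H, hfin, -, hH, hleast⟩ := hr
  choose! i hi using fun p hp => hcover _ _ (hH p hp)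
  obtain ⟨k, hk⟩ := (hfin.image i).bddAbove
  exact ⟨k, hleast _ (hσ k) fun p hp => hmono (hk ⟨p, hp, rfl⟩) _ _ (hi p hp)⟩

lemma IsRightCongruence.rel_slide_pow {r : N × M → N × M → Prop} (hr : IsRightCongruence r)
    {a x : N} {y : M} (hslide : r (a * x, 1) (a, y)) (n : ℕ) (w : N) (q : M) :
    r (a * (x ^ n * w), q) (a * w, y ^ n * q) := by
  induction n generalizing q with
  | zero => simpa using hr.1.refl _
  | succ n ih =>
    have hfirst : r (a * (x ^ (n + 1) * w), q) (a * (x ^ n * w), y * q) := by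
      simpa [pow_succ', mul_assoc] using hr.2 _ _ (x ^ n * w, q) hslide
    simpa [pow_succ, mul_assoc] using hr.1.trans hfirst (ih (y * q))

lemma IsRightCongruence.rel_mul_pow_mul {r : N × M → N × M → Prop} (hr : IsRightCongruence r)
    {a b d x : N} {y : M} (hslide : r (a * x, 1) (a, y)) (hswap : r (a * b, 1) (a * d, 1))
    (n : ℕ) (q : M) : r (a * (x ^ n * b), q) (a * (x ^ n * d), q) := by
  have hswap' : r (a * b, y ^ n * q) (a * d, y ^ n * q) := by
    simpa using hr.2 _ _ (1, y ^ n * q) hswap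
  exact hr.1.trans (hr.rel_slide_pow hslide n b q)
    (hr.1.trans hswap' (hr.1.symm (hr.rel_slide_pow hslide n d q)))

end RightCongruence

section Words

variable {α : Type*}

/-- The relation between words of equal length that agree from position `k` on; it serves to
cover the annihilator by an increasing chain of right congruences. -/
def AgreeFrom (k : ℕ) (u v : FreeMonoid α) : Prop :=
  u.length = v.length ∧ u.toList.drop k = v.toList.drop k

lemma isRightCongruence_agreeFrom (k : ℕ) : IsRightCongruence (AgreeFrom (α := α) k) := by
  refine ⟨⟨fun _ => ⟨rfl, rfl⟩, fun h => ⟨h.1.symm, h.2.symm⟩,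
    fun h h' => ⟨h.1.trans h'.1, h.2.trans h'.2⟩⟩, fun u v w ⟨hlen, hdrop⟩ => ⟨?_, ?_⟩⟩
  · rw [FreeMonoid.length_mul, FreeMonoid.length_mul, hlen]
  · have hlen' : u.toList.length = v.toList.length := hlen
    rw [FreeMonoid.toList_mul, FreeMonoid.toList_mul, List.drop_append, List.drop_append, hdrop,
      hlen']

lemma agreeFrom_mono : Monotone (AgreeFrom (α := α)) := by
  rintro k l hkl u v ⟨hlen, hdrop⟩
  refine ⟨hlen, ?_⟩
  rw [← Nat.add_sub_cancel' hkl, ← List.drop_drop, ← List.drop_drop, hdrop]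

lemma agreeFrom_length_of_length_eq {u v : FreeMonoid α} (h : u.length = v.length) :
    AgreeFrom u.length u v :=
  ⟨h, (List.drop_eq_nil_of_le le_rfl).trans (List.drop_eq_nil_of_le h.ge).symm⟩

lemma toList_of_pow (x : α) (n : ℕ) :
    (of x ^ n).toList = List.replicate n x := by
  induction n with
  | zero => rfl
  | succ n ih => rw [pow_succ', FreeMonoid.toList_mul, ih]; rfl

lemma eq_of_of_pow_mul_of_mul_eq {x b : α} (hbx : b ≠ x) (m n : ℕ) (u v : FreeMonoid α)
    (h : of x ^ m * (of b * u) = of x ^ n * (of b * v)) : m = n := by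
  classical
  have hidx (k : ℕ) (w : FreeMonoid α) : (of x ^ k * (of b * w)).toList.idxOf b = k := by
    have hb : b ∉ List.replicate k x := fun hb => hbx (List.eq_of_mem_replicate hb)
    simp [FreeMonoid.toList_mul, toList_of_pow, List.idxOf_append_of_notMem hb]
  rw [← hidx m u, h, hidx]

lemma eq_of_agreeFrom_of_pow_mul {x a b : α} {k : ℕ}
    (h : AgreeFrom k (of x ^ k * of b) (of x ^ k * of a)) : b = a := by
  simpa [FreeMonoid.toList_mul, toList_of_pow, List.drop_append] using h.2

end Words

section Slide

variable {α M : Type*} [DecidableEq α] [Monoid M] (x : α) (y : M)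

/-- The step of `slide` for one letter, on states `(k, m)` with `k` the number of letters kept so
far and `m` the current second component.  The letters `x` read while `k = 1` are those that
directly follow the first letter of the word. -/
def slideLetter (s : ℕ × M) (e : α) : ℕ × M :=
  if s.1 = 1 ∧ e = x then (1, y * s.2) else (s.1 + 1, s.2)

/-- The invariant of the right congruence, as a right action of words on `ℕ × M`:
`slide x y (0, q) w` is obtained from `(w, q)` by moving the power of `x` after the first letter of
`w` to the second component as a power of `y`, keeping only the length of the remaining word. -/
def slide (s : ℕ × M) (w : FreeMonoid α) : ℕ × M :=
  w.toList.foldl (slideLetter x y) s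

variable {x y}

lemma slide_of (s : ℕ × M) (e : α) : slide x y s (of e) = slideLetter x y s e := rfl

lemma slide_mul (s : ℕ × M) (w w' : FreeMonoid α) :
    slide x y s (w * w') = slide x y (slide x y s w) w' :=
  List.foldl_append

lemma slide_zero_of (q : M) (a : α) : slide x y (0, q) (of a) = (1, q) := by
  simp [slide_of, slideLetter]

lemma slide_mul_right (s : ℕ × M) (q : M) (w : FreeMonoid α) :
    slide x y (s.1, s.2 * q) w = ((slide x y s w).1, (slide x y s w).2 * q) := by
  induction w using FreeMonoid.inductionOn' generalizing s with
  | one => rfl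
  | of_mul e w ih =>
    have hletter : slideLetter x y (s.1, s.2 * q) e =
        ((slideLetter x y s e).1, (slideLetter x y s e).2 * q) := by
      unfold slideLetter
      split_ifs <;> simp [mul_assoc]
    rw [slide_mul, slide_mul, slide_of, slide_of, hletter, ih]

lemma exists_slide_eq (s : ℕ × M) (w : FreeMonoid α) :
    ∃ n, (slide x y s w).1 + n = s.1 + w.length ∧ (slide x y s w).2 = y ^ n * s.2 := by
  induction w using FreeMonoid.inductionOn' generalizing s with
  | one => exact ⟨0, rfl, by rw [pow_zero, one_mul]; rfl⟩
  | of_mul e w ih =>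
    obtain ⟨n, hlen, hsnd⟩ := ih (slideLetter x y s e)
    rw [slide_mul, slide_of, hsnd, FreeMonoid.length_mul, FreeMonoid.length_of]
    by_cases h : s.1 = 1 ∧ e = x
    · simp only [slideLetter, if_pos h] at hlen ⊢
      exact ⟨n + 1, by lia, by rw [pow_succ, mul_assoc]⟩
    · simp only [slideLetter, if_neg h] at hlen ⊢
      exact ⟨n, by lia, rfl⟩

lemma isRightCongruence_slide :
    IsRightCongruence fun u v : FreeMonoid α × M =>
      slide x y (0, u.2) u.1 = slide x y (0, v.2) v.1 := by
  refine ⟨eq_equivalence.comap fun u : FreeMonoid α × M => slide x y (0, u.2) u.1,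
    fun u v w (huv : slide x y (0, u.2) u.1 = slide x y (0, v.2) v.1) => ?_⟩
  have hmul (u : FreeMonoid α × M) : slide x y (0, (u * w).2) (u * w).1 =
      slide x y ((slide x y (0, u.2) u.1).1, (slide x y (0, u.2) u.1).2 * w.2) w.1 := by
    rw [Prod.fst_mul, Prod.snd_mul, slide_mul, ← slide_mul_right]
  simp only [hmul, huv]

lemma length_eq_of_slide_eq {c s t : M} {u v : FreeMonoid α}
    (hc : ∀ (m n : ℕ) (s t : M), y ^ m * (c * s) = y ^ n * (c * t) → m = n)
    (h : slide x y (1, c * s) u = slide x y (1, c * t) v) : u.length = v.length := by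
  obtain ⟨m, hm, hm'⟩ := exists_slide_eq (x := x) (y := y) (1, c * s) u
  obtain ⟨n, hn, hn'⟩ := exists_slide_eq (x := x) (y := y) (1, c * t) v
  have hmn : m = n := hc m n s t (by rw [← hm', ← hn', h])
  rw [h] at hm
  lia

end Slide

section Annihilator

variable {α M : Type*} [Monoid M] {a x b : α} {y : M}
  {r : FreeMonoid α × M → FreeMonoid α × M → Prop}

lemma RCongGenBy.slide_eq [DecidableEq α] (hax : a ≠ x) (hbx : b ≠ x)
    (hr : RCongGenBy {((of a * of x, 1), (of a, y)), ((of a * of b, 1), (of a * of a, 1))} r)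
    {u v : FreeMonoid α × M} (h : r u v) : slide x y (0, u.2) u.1 = slide x y (0, v.2) v.1 := by
  refine hr.2.2 _ isRightCongruence_slide ?_ u v h
  rintro p (rfl | rfl) <;> simp [slide_mul, slide_of, slideLetter, hax, hbx]

lemma RCongGenBy.length_fst_eq_of_ann (hax : a ≠ x) (hbx : b ≠ x) {c : M}
    (hc : ∀ (m n : ℕ) (s t : M), y ^ m * (c * s) = y ^ n * (c * t) → m = n)
    (hr : RCongGenBy {((of a * of x, 1), (of a, y)), ((of a * of b, 1), (of a * of a, 1))} r)
    {u v : FreeMonoid α × M} (h : r ((of a, c) * u) ((of a, c) * v)) :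
    u.1.length = v.1.length := by
  classical
  have hslide := hr.slide_eq hax hbx h
  simp only [Prod.fst_mul, Prod.snd_mul, slide_mul, slide_zero_of] at hslide
  exact length_eq_of_slide_eq hc hslide

end Annihilator

theorem stmt17_general {α M : Type*} [Monoid M] {a x b : α} (hax : a ≠ x) (hbx : b ≠ x)
    (hba : b ≠ a) {y c : M}
    (hc : ∀ (m n : ℕ) (s t : M), y ^ m * (c * s) = y ^ n * (c * t) → m = n)
    {r : FreeMonoid α × M → FreeMonoid α × M → Prop}
    (hr : RCongGenBy
      {((of a * of x, 1), (of a, y)), ((of a * of b, 1), (of a * of a, 1))} r) :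
    ¬ FGRightCongruence (fun u v : FreeMonoid α × M => r ((of a, c) * u) ((of a, c) * v)) ∧
    ¬ RightCoherent (FreeMonoid α × M) := by
  have hann : ¬ FGRightCongruence
      (fun u v : FreeMonoid α × M => r ((of a, c) * u) ((of a, c) * v)) := by
    intro hfg
    obtain ⟨k, hk⟩ := hfg.exists_le_of_monotone
      (σ := fun k u v => AgreeFrom k u.1 v.1)
      (fun k => (isRightCongruence_agreeFrom k).comap (MonoidHom.fst (FreeMonoid α) M))
      (fun k l hkl u v => agreeFrom_mono hkl u.1 v.1)
      (fun u v h => ⟨_, agreeFrom_length_of_length_eq (hr.length_fst_eq_of_ann hax hbx hc h)⟩)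
    have hmem : r ((of a, c) * (of x ^ k * of b, 1)) ((of a, c) * (of x ^ k * of a, 1)) :=
      hr.1.rel_mul_pow_mul (hr.2.1 _ (.inl rfl)) (hr.2.1 _ (.inr rfl)) k (c * 1)
    exact hba (eq_of_agreeFrom_of_pow_mul (hk _ _ hmem))
  exact ⟨hann, fun hcoh => hann (hcoh r ⟨_, Set.toFinite _, hr⟩ (of a, c) 1).2⟩

theorem stmt17 (r : F17 × F17 → F17 × F17 → Prop)
    (hr : RCongGenBy
      ({((a17 * x17, (1 : F17)), (a17, x17)),
        ((a17 * b17, (1 : F17)), (a17 * a17, (1 : F17)))} :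
        Set ((F17 × F17) × (F17 × F17))) r) :
    ¬ FGRightCongruence (fun u v : F17 × F17 => r ((a17, b17) * u) ((a17, b17) * v)) ∧
    ¬ RightCoherent (F17 × F17) :=
  stmt17_general (by decide) (by decide) (by decide) (eq_of_of_pow_mul_of_mul_eq (by decide)) hr
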